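/- Let p = p(n) ∈ [0,1] satisfy p(n)·(log n)^{1/3} → ∞ as n → ∞ and limsup_{n→∞} p(n) < 1/2. Then asymptotically almost surely, every orientation of the binomial random graph G(n,p) contains a Sullivan vertex. -/

import Mathlib

open Filter

/-- The outneighbourhood `N1(v)` of `v` in the digraph with arc relation `D`. -/
def outNbr {V : Type*} (D : V → V → Prop) (v : V) : Set V := {w | w ≠ v ∧ D v w}

/-- The inneighbourhood `N⁻(v)` of `v`. -/
def inNbr {V : Type*} (D : V → V → Prop) (v : V) : Set V := {w | w ≠ v ∧ D w v}

/-- The second outneighbourhood `N2(v)` of `v`. -/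
def outNbr2 {V : Type*} (D : V → V → Prop) (v : V) : Set V :=
  {w | w ∉ insert v (outNbr D v) ∧ ∃ u ∈ outNbr D v, D u w}

/-- `v` is a Seymour vertex: `|N2(v)| ≥ |N1(v)|`. -/
def SeymourVertex {V : Type*} (D : V → V → Prop) (v : V) : Prop :=
  (outNbr D v).ncard ≤ (outNbr2 D v).ncard

/-- `v` is a Sullivan vertex: `|N2(v)| ≥ |N⁻(v)|`. -/
def SullivanVertex {V : Type*} (D : V → V → Prop) (v : V) : Prop :=
  (inNbr D v).ncard ≤ (outNbr2 D v).ncard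

/-- An oriented graph: an asymmetric (hence irreflexive and loopless) arc relation. -/
def OrientedGraph {V : Type*} (D : V → V → Prop) : Prop := ∀ u v, D u v → ¬ D v u

/-- `D` is an orientation of the simple graph `G`. -/
def Orients {V : Type*} (D : V → V → Prop) (G : SimpleGraph V) : Prop :=
  OrientedGraph D ∧ ∀ u v, G.Adj u v ↔ (D u v ∨ D v u)

/-- Strong connectivity of a digraph: every vertex reaches every other by a directed path. -/
def StrongConn {V : Type*} (D : V → V → Prop) : Prop := ∀ u v, Relation.ReflTransGen D u v

/-- The number of edges of `G` with one endpoint in `A` and the other in `B`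
(counted via ordered pairs; equals `e(A,B)` for disjoint `A`, `B`). -/
noncomputable def eBtw {V : Type*} (G : SimpleGraph V) (A B : Set V) : ℕ :=
  {p : V × V | p.1 ∈ A ∧ p.2 ∈ B ∧ G.Adj p.1 p.2}.ncard

/-- The number of edges of `G` with both endpoints in `A`. -/
noncomputable def eIn {V : Type*} (G : SimpleGraph V) (A : Set V) : ℕ :=
  {e | e ∈ G.edgeSet ∧ ∀ v ∈ e, v ∈ A}.ncard

open scoped Classical in
/-- The probability that the binomial random graph `G(n,p)` satisfies the property `P`. -/
noncomputable def gnpProb (n : ℕ) (p : ℝ) (P : SimpleGraph (Fin n) → Prop) : ℝ :=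
  ∑ G : SimpleGraph (Fin n),
    if P G then p ^ G.edgeSet.ncard * (1 - p) ^ (n.choose 2 - G.edgeSet.ncard) else 0

/-!
Suppose no vertex is a Sullivan vertex. For every `v`, the set of vertices that `v` does not reach
in at most two steps has size at least `n - deg v ≈ (1 - p) n`, and no out-neighbour of `v` sends
an arc into it. By pseudorandomness, any `C / p` out-neighbours of `v` include one that receives
about `p (1 - p) n` arcs from this set. As `p` is bounded away from `1 / 2` and all degrees are at
most about `p n`, the out-degree of that vertex is below `p n / 2` by a margin linear in `p n`.
So, with `H` the set of vertices whose out-degree is not below `p n / 2` by such a margin, every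
vertex has only `O(1 / p)` out-neighbours in `H`. Since `H` spans about `p |H| ^ 2 / 2` edges, this
gives `|H| = O(1 / p ^ 2)`, which is `o(n)` as soon as `p ^ 2 n → ∞`. But then almost all vertices
have out-degree below `p n / 2` by a margin linear in `p n`, and they span too few edges.
-/

open MeasureTheory ProbabilityTheory SimpleGraph unitInterval

/-! ### Chernoff bounds in the binomial random graph -/

section BinomialRandom

variable {V : Type*} [Finite V]

theorem mgf_ncard_inter_setBernoulli {ι : Type*} [Finite ι] {s u : Set ι} (hsu : s ⊆ u) (p : I)
    (t : ℝ) :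
    mgf (fun a : Set ι ↦ ((a ∩ s).ncard : ℝ)) setBer(u, p) t =
      (p * Real.exp t + (1 - p)) ^ s.ncard := by
  classical
  cases nonempty_fintype ι
  have hexp (x : ι → Prop) : Real.exp (t * (({i | x i} ∩ s).ncard : ℝ)) =
      ∏ i, if x i ∧ i ∈ s then Real.exp t else 1 := by
    simp [Finset.prod_ite, ← Real.exp_nat_mul, mul_comm t, Set.ncard_eq_toFinset_card',
      Set.inter_def]
  have hfactor (i : ι) : ∫ x : Prop, (if x ∧ i ∈ s then Real.exp t else 1)
      ∂(toNNReal p • Measure.dirac (i ∈ u) + toNNReal (σ p) • Measure.dirac False) =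
      if i ∈ s then p * Real.exp t + (1 - p) else 1 := by
    rw [integral_add_measure .of_finite .of_finite]
    by_cases hi : i ∈ s <;> simp [hi, @hsu i, NNReal.smul_def]
  rw [mgf, setBernoulli_eq_map, integral_map (by fun_prop) (by fun_prop)]
  simp only [hexp]
  rw [Measure.infinitePi_eq_pi, integral_fintype_prod_eq_prod
    (f := fun i (x : Prop) ↦ if x ∧ i ∈ s then Real.exp t else 1)]
  simp [hfactor, Finset.prod_ite, Set.ncard_eq_toFinset_card']

instance measurableSingletonClass_simpleGraph : MeasurableSingletonClass (SimpleGraph V) where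
  measurableSet_singleton G := by
    simpa [Set.preimage, edgeSet_inj] using measurable_edgeSet (measurableSet_singleton G.edgeSet)

theorem mgf_ncard_edgeSet_inf_binomialRandom (K : SimpleGraph V) (p : I) (t : ℝ) :
    mgf (fun G : SimpleGraph V ↦ ((G ⊓ K).edgeSet.ncard : ℝ)) G(V, p) t =
      (p * Real.exp t + (1 - p)) ^ K.edgeSet.ncard := by
  have hinter (s : Set (Sym2 V)) : (fromEdgeSet s ⊓ K).edgeSet = s ∩ K.edgeSet := by
    have := K.edgeSet_subset_compl_diagSet
    grind [edgeSet_inf, edgeSet_fromEdgeSet]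
  rw [← mgf_ncard_inter_setBernoulli K.edgeSet_subset_compl_diagSet, binomialRandom_eq_map,
    mgf_map (by fun_prop) Integrable.of_finite.aestronglyMeasurable]
  simp only [Function.comp_def, hinter]

theorem mgf_ncard_edgeSet_inf_binomialRandom_le (K : SimpleGraph V) (p : I) {t : ℝ} (ht : |t| ≤ 1) :
    mgf (fun G : SimpleGraph V ↦ ((G ⊓ K).edgeSet.ncard : ℝ)) G(V, p) t ≤
      Real.exp (p * K.edgeSet.ncard * (t + t ^ 2)) := by
  have hexp : Real.exp t - 1 ≤ t + t ^ 2 := by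
    linarith [(abs_le.1 (Real.abs_exp_sub_one_sub_id_le ht)).2]
  have hbase : p * Real.exp t + (1 - p) ≤ Real.exp (p * (t + t ^ 2)) :=
    calc p * Real.exp t + (1 - p) = p * (Real.exp t - 1) + 1 := by ring
      _ ≤ p * (t + t ^ 2) + 1 := by gcongr; exact p.2.1
      _ ≤ Real.exp (p * (t + t ^ 2)) := Real.add_one_le_exp _
  have hnonneg : 0 ≤ p * Real.exp t + (1 - p) :=
    add_nonneg (mul_nonneg p.2.1 (Real.exp_pos t).le) (sub_nonneg.2 p.2.2)
  calc mgf (fun G : SimpleGraph V ↦ ((G ⊓ K).edgeSet.ncard : ℝ)) G(V, p) t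
      = (p * Real.exp t + (1 - p)) ^ K.edgeSet.ncard :=
        mgf_ncard_edgeSet_inf_binomialRandom K p t
    _ ≤ Real.exp (p * (t + t ^ 2)) ^ K.edgeSet.ncard := by gcongr
    _ = Real.exp (p * K.edgeSet.ncard * (t + t ^ 2)) := by
        rw [← Real.exp_nat_mul]
        ring_nf

theorem gnpProb_eq_binomialRandom_real (n : ℕ) (p : I) (P : SimpleGraph (Fin n) → Prop) :
    gnpProb n p P = G(Fin n, p).real {G | P G} := by
  classical
  have hsingleton (G : SimpleGraph (Fin n)) : G(Fin n, p).real {G} =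
      p ^ G.edgeSet.ncard * (1 - p : ℝ) ^ (n.choose 2 - G.edgeSet.ncard) := by
    simp [measureReal_def]
  rw [← Finset.coe_filter_univ, ← sum_measureReal_singleton, Finset.sum_filter, gnpProb]
  simp [hsingleton]

theorem binomialRandom_real_le_ncard_edgeSet_inf_le {K : SimpleGraph V} {m ε : ℝ} (p : I)
    (hK : K.edgeSet.ncard ≤ m) (hε₀ : 0 ≤ ε) (hε₁ : ε ≤ 1) :
    G(V, p).real {G | (1 + ε) * p * m ≤ (G ⊓ K).edgeSet.ncard} ≤
      Real.exp (-(ε ^ 2 * p * m / 4)) := by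
  have ht : |ε / 2| ≤ 1 := by rw [abs_of_nonneg] <;> linarith
  calc G(V, p).real {G | (1 + ε) * p * m ≤ (G ⊓ K).edgeSet.ncard}
      ≤ Real.exp (-(ε / 2) * ((1 + ε) * p * m)) *
          mgf (fun G : SimpleGraph V ↦ ((G ⊓ K).edgeSet.ncard : ℝ)) G(V, p) (ε / 2) :=
        measure_ge_le_exp_mul_mgf _ (by linarith) .of_finite
    _ ≤ Real.exp (-(ε / 2) * ((1 + ε) * p * m)) *
          Real.exp (p * m * (ε / 2 + (ε / 2) ^ 2)) := by
        grw [mgf_ncard_edgeSet_inf_binomialRandom_le K p ht, hK]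
        exact p.2.1
    _ = Real.exp (-(ε ^ 2 * p * m / 4)) := by
        rw [← Real.exp_add]
        ring_nf

theorem binomialRandom_real_ncard_edgeSet_inf_le_le (K : SimpleGraph V) {ε : ℝ} (p : I)
    (hε₀ : 0 ≤ ε) (hε₁ : ε ≤ 1) :
    G(V, p).real {G | (G ⊓ K).edgeSet.ncard ≤ (1 - ε) * p * K.edgeSet.ncard} ≤
      Real.exp (-(ε ^ 2 * p * K.edgeSet.ncard / 4)) := by
  have ht : |-(ε / 2)| ≤ 1 := by rw [abs_neg, abs_of_nonneg] <;> linarith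
  calc G(V, p).real {G | (G ⊓ K).edgeSet.ncard ≤ (1 - ε) * p * K.edgeSet.ncard}
      ≤ Real.exp (-(-(ε / 2)) * ((1 - ε) * p * K.edgeSet.ncard)) *
          mgf (fun G : SimpleGraph V ↦ ((G ⊓ K).edgeSet.ncard : ℝ)) G(V, p) (-(ε / 2)) :=
        measure_le_le_exp_mul_mgf _ (by linarith) .of_finite
    _ ≤ Real.exp (-(-(ε / 2)) * ((1 - ε) * p * K.edgeSet.ncard)) *
          Real.exp (p * K.edgeSet.ncard * (-(ε / 2) + (-(ε / 2)) ^ 2)) := by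
        grw [mgf_ncard_edgeSet_inf_binomialRandom_le K p ht]
    _ = Real.exp (-(ε ^ 2 * p * K.edgeSet.ncard / 4)) := by
        rw [← Real.exp_add]
        ring_nf

theorem binomialRandom_real_ncard_edgeSet_inf_le_le_exp_pow (K : SimpleGraph V) {ε : ℝ} (p : I)
    (hε₀ : 0 < ε) (hε₁ : ε ≤ 1) (hK : 8 * Nat.card V / ε ^ 2 ≤ p * K.edgeSet.ncard) :
    G(V, p).real {G | (G ⊓ K).edgeSet.ncard ≤ (1 - ε) * p * K.edgeSet.ncard} ≤
      Real.exp (-2) ^ Nat.card V := by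
  refine (binomialRandom_real_ncard_edgeSet_inf_le_le K p hε₀.le hε₁).trans ?_
  rw [← Real.exp_nat_mul, Real.exp_le_exp]
  rw [div_le_iff₀ (by positivity)] at hK
  linarith

end BinomialRandom

/-! ### Pseudorandom graphs -/

section Pseudorandom

variable {V : Type*}

theorem ncard_edgeSet_inf_starGraph (G : SimpleGraph V) (v : V) :
    (G ⊓ starGraph v).edgeSet.ncard = (G.neighborSet v).ncard := by
  classical
  have hedges : (G ⊓ starGraph v).edgeSet = G.incidenceSet v := by
    ext e
    induction e with | _ a b =>
    simp only [mem_edgeSet, inf_adj, starGraph_adj, mk'_mem_incidenceSet_iff]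
    grind [Adj.ne]
  rw [hedges]
  exact Nat.card_congr (G.incidenceSetEquivNeighborSet v)

theorem ncard_edgeSet_starGraph_le [Finite V] (v : V) :
    (starGraph v).edgeSet.ncard ≤ Nat.card V := by
  rw [← top_inf_eq (starGraph v), ncard_edgeSet_inf_starGraph]
  exact Set.ncard_le_card _

theorem inf_between_top (G : SimpleGraph V) (A B : Set V) :
    G ⊓ (⊤ : SimpleGraph V).between A B = G.between A B := by
  ext a b
  simp only [inf_adj, between_adj, top_adj]
  grind [Adj.ne]

theorem ncard_edgeSet_between_top {A B : Set V} (hAB : Disjoint A B) :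
    ((⊤ : SimpleGraph V).between A B).edgeSet.ncard = A.ncard * B.ncard := by
  have hedges : ((⊤ : SimpleGraph V).between A B).edgeSet =
      Function.uncurry Sym2.mk '' (A ×ˢ B) := by
    ext e
    induction e with | _ a b =>
    simp only [mem_edgeSet, between_adj, top_adj, Set.mem_image, Set.mem_prod, Prod.exists,
      Function.uncurry_apply_pair, Sym2.eq_iff]
    grind [Set.disjoint_left.1 hAB]
  rw [hedges, Set.InjOn.ncard_image, Set.ncard_prod]
  rintro ⟨a, b⟩ ⟨ha, _⟩ ⟨a', b'⟩ ⟨_, hb'⟩ h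
  simp only [Function.uncurry_apply_pair, Sym2.eq_iff] at h
  grind [Set.disjoint_left.1 hAB]

theorem ncard_edgeSet_between_top_self [Finite V] (A : Set V) :
    ((⊤ : SimpleGraph V).between A A).edgeSet.ncard = A.ncard.choose 2 := by
  classical
  cases nonempty_fintype V
  have hedges : ((⊤ : SimpleGraph V).between A A).edgeSet =
      ↑(Finset.image (Function.uncurry Sym2.mk) A.toFinset.offDiag) := by
    ext e
    induction e with | _ a b =>
    simp only [mem_edgeSet, between_adj, top_adj, Finset.coe_image, Set.mem_image,
      Finset.mem_coe, Finset.mem_offDiag, Set.mem_toFinset, Prod.exists,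
      Function.uncurry_apply_pair, Sym2.eq_iff]
    grind
  rw [hedges, Set.ncard_coe_finset, Sym2.card_image_offDiag, Set.ncard_eq_toFinset_card']

theorem ncard_edgeSet_le_mul [Finite V] {G : SimpleGraph V} {A : Set V} {N : V → Set V} {k : ℝ}
    (hcover : ∀ u v, G.Adj u v → (u ∈ A ∧ v ∈ N u) ∨ (v ∈ A ∧ u ∈ N v))
    (hN : ∀ a ∈ A, (N a).ncard ≤ k) : G.edgeSet.ncard ≤ A.ncard * k := by
  classical
  have hsubset : G.edgeSet ⊆ ⋃ a ∈ A.toFinite.toFinset, Sym2.mk a '' N a := by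
    intro e
    induction e with | _ u v =>
    intro huv
    simp only [Set.Finite.mem_toFinset, Set.mem_iUnion, Set.mem_image, exists_prop, Sym2.eq_iff]
    grind [hcover u v huv]
  calc (G.edgeSet.ncard : ℝ)
      ≤ (⋃ a ∈ A.toFinite.toFinset, Sym2.mk a '' N a).ncard := by
        exact_mod_cast Set.ncard_le_ncard hsubset
    _ ≤ ∑ a ∈ A.toFinite.toFinset, ((Sym2.mk a '' N a).ncard : ℝ) := by
        exact_mod_cast Finset.set_ncard_biUnion_le _ _
    _ ≤ ∑ _a ∈ A.toFinite.toFinset, k := by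
        gcongr with a ha
        exact (Nat.cast_le.2 (Set.ncard_image_le (N a).toFinite)).trans
          (hN a (A.toFinite.mem_toFinset.1 ha))
    _ = A.ncard * k := by
        rw [Finset.sum_const, nsmul_eq_mul, ← Set.ncard_eq_toFinset_card]

/-- One-sided pseudorandomness of edge density `p`: every degree is at most `(1 + ε) p |V|`, and
`G` has at least a `(1 - ε) p` share of the pairs between `A` and `B`, provided there are many such
pairs. The two sets may overlap; for `A = B` the pairs are those inside `A`. The threshold
`8 |V| / ε ^ 2` makes the Chernoff bound for one pair of sets at most `exp (-2 |V|)`, which survives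
a union bound over all `4 ^ |V|` pairs. -/
structure IsPseudorandom (ε p : ℝ) (G : SimpleGraph V) : Prop where
  ncard_neighborSet_le (v : V) : ((G.neighborSet v).ncard : ℝ) ≤ (1 + ε) * p * Nat.card V
  le_ncard_edgeSet_between (A B : Set V)
    (hlarge : 8 * Nat.card V / ε ^ 2 ≤ p * ((⊤ : SimpleGraph V).between A B).edgeSet.ncard) :
    (1 - ε) * p * ((⊤ : SimpleGraph V).between A B).edgeSet.ncard ≤ (G.between A B).edgeSet.ncard

theorem binomialRandom_real_not_isPseudorandom_le [Finite V] (p : I) {ε : ℝ} (hε₀ : 0 < ε)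
    (hε₁ : ε ≤ 1) :
    G(V, p).real {G | ¬ IsPseudorandom ε p G} ≤
      Nat.card V * Real.exp (-(ε ^ 2 * p * Nat.card V / 4)) +
        (4 * Real.exp (-2)) ^ Nat.card V := by
  classical
  cases nonempty_fintype V
  let n := Nat.card V
  let K (q : Set V × Set V) : SimpleGraph V := (⊤ : SimpleGraph V).between q.1 q.2
  let highDegree (v : V) : Set (SimpleGraph V) :=
    {G | (1 + ε) * p * n ≤ (G ⊓ starGraph v).edgeSet.ncard}
  let sparse (q : Set V × Set V) : Set (SimpleGraph V) :=
    {G | 8 * n / ε ^ 2 ≤ p * (K q).edgeSet.ncard ∧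
      (G ⊓ K q).edgeSet.ncard ≤ (1 - ε) * p * (K q).edgeSet.ncard}
  have hcover : {G : SimpleGraph V | ¬ IsPseudorandom ε p G} ⊆
      (⋃ v, highDegree v) ∪ ⋃ q, sparse q := by
    intro G hG
    contrapose! hG
    simp only [Set.mem_union, Set.mem_iUnion, not_or, not_exists, highDegree, sparse, K,
      Set.mem_ofPred_eq, not_and, not_le, ncard_edgeSet_inf_starGraph, inf_between_top,
      Prod.forall] at hG
    exact not_not.2 ⟨fun v ↦ (hG.1 v).le, fun A B h ↦ (hG.2 A B h).le⟩
  have hhighDegree (v : V) : G(V, p).real (highDegree v) ≤ Real.exp (-(ε ^ 2 * p * n / 4)) :=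
    binomialRandom_real_le_ncard_edgeSet_inf_le p
      (by exact_mod_cast ncard_edgeSet_starGraph_le v) hε₀.le hε₁
  have hsparse (q : Set V × Set V) : G(V, p).real (sparse q) ≤ Real.exp (-2) ^ n := by
    by_cases hq : 8 * n / ε ^ 2 ≤ p * (K q).edgeSet.ncard
    · simp only [sparse, hq, true_and]
      exact binomialRandom_real_ncard_edgeSet_inf_le_le_exp_pow (K q) p hε₀ hε₁ hq
    · simp only [sparse, hq, false_and, Set.ofPred_false, measureReal_empty]
      positivity
  calc G(V, p).real {G | ¬ IsPseudorandom ε p G}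
      ≤ G(V, p).real (⋃ v, highDegree v) + G(V, p).real (⋃ q, sparse q) :=
        (measureReal_mono hcover).trans (measureReal_union_le _ _)
    _ ≤ ∑ v, G(V, p).real (highDegree v) + ∑ q, G(V, p).real (sparse q) :=
        add_le_add (measureReal_iUnion_fintype_le _) (measureReal_iUnion_fintype_le _)
    _ ≤ ∑ _v : V, Real.exp (-(ε ^ 2 * p * n / 4)) + ∑ _q : Set V × Set V, Real.exp (-2) ^ n := by
        gcongr with v _ q _
        exacts [hhighDegree v, hsparse q]
    _ = n * Real.exp (-(ε ^ 2 * p * n / 4)) + (4 * Real.exp (-2)) ^ n := by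
        simp [n, ← mul_pow]

end Pseudorandom

/-! ### Sullivan vertices in orientations of pseudorandom graphs -/

section Orientation

variable {V : Type*}

/-- The vertices at directed distance more than two from `v`. No out-neighbour of `v` sends an arc
into this set, and it is large when `v` is not a Sullivan vertex. -/
def unreached (D : V → V → Prop) (v : V) : Set V :=
  (insert v (outNbr D v ∪ outNbr2 D v))ᶜ

theorem disjoint_outNbr_unreached (D : V → V → Prop) (v : V) :
    Disjoint (outNbr D v) (unreached D v) :=
  Set.disjoint_left.2 fun _ hout hun ↦ hun (.inr (.inl hout))

theorem not_arc_of_mem_unreached {D : V → V → Prop} {v u w : V} (hu : u ∈ outNbr D v)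
    (hw : w ∈ unreached D v) : ¬ D u w := by
  grind [unreached, outNbr2]

variable [Finite V] {ε p : ℝ} {G : SimpleGraph V} {D : V → V → Prop} {A : Set V}

theorem card_le_of_not_sullivanVertex {v : V} (hv : ¬ SullivanVertex D v) :
    Nat.card V ≤ (unreached D v).ncard + (outNbr D v).ncard + (inNbr D v).ncard := by
  have hreached : (insert v (outNbr D v ∪ outNbr2 D v)).ncard ≤
      (outNbr D v).ncard + (outNbr2 D v).ncard + 1 :=
    (Set.ncard_insert_le _ _).trans (by grw [Set.ncard_union_le])
  have hcompl := Set.ncard_add_ncard_compl (insert v (outNbr D v ∪ outNbr2 D v))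
  rw [SullivanVertex, not_le] at hv
  rw [unreached]
  lia

theorem Orients.ncard_outNbr_add_ncard_inNbr (hD : Orients D G) (v : V) :
    (outNbr D v).ncard + (inNbr D v).ncard = (G.neighborSet v).ncard := by
  have hdisj : Disjoint (outNbr D v) (inNbr D v) :=
    Set.disjoint_left.2 fun w hout hin ↦ hD.1 v w hout.2 hin.2
  rw [← Set.ncard_union_eq hdisj]
  congr 1
  ext w
  have hne : G.Adj v w → w ≠ v := fun h ↦ h.ne'
  grind [mem_neighborSet, outNbr, inNbr, hD.2 v w]

theorem Orients.ncard_edgeSet_between_le_mul (hD : Orients D G) {Y Z : Set V} {k : ℝ}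
    (hYZ : ∀ y ∈ Y, ∀ z ∈ Z, ¬ D y z) (hk : ∀ y ∈ Y, (inNbr D y).ncard ≤ k) :
    (G.between Y Z).edgeSet.ncard ≤ Y.ncard * k := by
  refine ncard_edgeSet_le_mul (N := inNbr D) (fun a b hab ↦ ?_) hk
  have hne := hab.1.ne
  rw [between_adj, hD.2] at hab
  grind [inNbr]

theorem Orients.ncard_edgeSet_between_self_le_mul (hD : Orients D G) {k : ℝ}
    (hk : ∀ a ∈ A, (outNbr D a ∩ A).ncard ≤ k) :
    (G.between A A).edgeSet.ncard ≤ A.ncard * k := by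
  refine ncard_edgeSet_le_mul (N := fun a ↦ outNbr D a ∩ A) (fun a b hab ↦ ?_) hk
  have hne := hab.1.ne
  rw [between_adj, hD.2] at hab
  grind [outNbr]

theorem IsPseudorandom.ncard_outNbr_add_ncard_inNbr_le (hG : IsPseudorandom ε p G)
    (hD : Orients D G) (v : V) :
    (outNbr D v).ncard + (inNbr D v).ncard ≤ (1 + ε) * p * Nat.card V := by
  simpa only [← hD.ncard_outNbr_add_ncard_inNbr, Nat.cast_add] using hG.ncard_neighborSet_le v

theorem IsPseudorandom.le_ncard_unreached {v : V} (hG : IsPseudorandom ε p G) (hD : Orients D G)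
    (hv : ¬ SullivanVertex D v) :
    (1 - (1 + ε) * p) * Nat.card V ≤ (unreached D v).ncard := by
  have hcard : (Nat.card V : ℝ) ≤
      (unreached D v).ncard + (outNbr D v).ncard + (inNbr D v).ncard := by
    exact_mod_cast card_le_of_not_sullivanVertex hv
  linarith [hG.ncard_outNbr_add_ncard_inNbr_le hD v]

theorem IsPseudorandom.ncard_outNbr_inter_lt {κ : ℝ} {v : V} (hG : IsPseudorandom ε p G)
    (hD : Orients D G) (hv : ¬ SullivanVertex D v) (hε : 0 < ε) (hε₁ : ε ≤ 1) (hp : 0 < p)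
    (hεp : (1 + ε) * p ≤ 1 / 2) (hκ : 1 + ε - κ < (1 - ε) * (1 - (1 + ε) * p)) :
    p * (outNbr D v ∩ {u | κ * p * Nat.card V ≤ (outNbr D u).ncard}).ncard < 16 / ε ^ 2 := by
  let n : ℝ := Nat.card V
  let Y := outNbr D v ∩ {u | κ * p * n ≤ (outNbr D u).ncard}
  let Z := unreached D v
  change p * Y.ncard < 16 / ε ^ 2
  have : Nonempty V := ⟨v⟩
  have hn : 0 < n := Nat.cast_pos.2 Nat.card_pos
  have hdisj : Disjoint Y Z := (disjoint_outNbr_unreached D v).mono_left Set.inter_subset_left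
  have hZ : (1 - (1 + ε) * p) * n ≤ Z.ncard := hG.le_ncard_unreached hD hv
  have hinNbr (y : V) (hy : y ∈ Y) : ((inNbr D y).ncard : ℝ) ≤ (1 + ε - κ) * p * n := by
    have hout : κ * p * n ≤ (outNbr D y).ncard := hy.2
    linarith [hG.ncard_outNbr_add_ncard_inNbr_le hD y]
  have hedges : (G.between Y Z).edgeSet.ncard ≤ Y.ncard * ((1 + ε - κ) * p * n) :=
    hD.ncard_edgeSet_between_le_mul (fun _ hy _ hz ↦ not_arc_of_mem_unreached hy.1 hz) hinNbr
  by_contra! hmany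
  have hlarge : 8 * n / ε ^ 2 ≤ p * ((⊤ : SimpleGraph V).between Y Z).edgeSet.ncard := by
    rw [ncard_edgeSet_between_top hdisj, Nat.cast_mul]
    calc 8 * n / ε ^ 2 = 16 / ε ^ 2 * (1 / 2 * n) := by ring
      _ ≤ p * Y.ncard * ((1 - (1 + ε) * p) * n) := by gcongr; linarith
      _ ≤ p * (Y.ncard * Z.ncard) := by grw [hZ, mul_assoc]
  have hY : (0 : ℝ) < Y.ncard :=
    pos_of_mul_pos_right ((by positivity : 0 < 16 / ε ^ 2).trans_le hmany) hp.le
  have hdense : p * Y.ncard * ((1 - ε) * ((1 - (1 + ε) * p) * n)) ≤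
      p * Y.ncard * ((1 + ε - κ) * n) :=
    calc p * Y.ncard * ((1 - ε) * ((1 - (1 + ε) * p) * n))
        ≤ p * Y.ncard * ((1 - ε) * Z.ncard) := by
          gcongr
      _ = (1 - ε) * p * ((⊤ : SimpleGraph V).between Y Z).edgeSet.ncard := by
          rw [ncard_edgeSet_between_top hdisj, Nat.cast_mul]
          ring
      _ ≤ Y.ncard * ((1 + ε - κ) * p * n) :=
          (hG.le_ncard_edgeSet_between Y Z hlarge).trans hedges
      _ = p * Y.ncard * ((1 + ε - κ) * n) := by ring
  rw [← mul_assoc (1 - ε)] at hdense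
  exact hκ.not_ge (le_of_mul_le_mul_right (le_of_mul_le_mul_left hdense (by positivity)) hn)

theorem eight_mul_div_sq_le {n a : ℝ} (hε : 0 < ε) (hp : 0 ≤ p) (hn : 1 ≤ 2 * ε * n)
    (hpn : 2 ≤ ε ^ 4 * (p * n)) (ha : 4 * ε * n ≤ a) :
    8 * n / ε ^ 2 ≤ p * (a * (a - 1) / 2) := by
  have hn₀ : 0 < n := pos_of_mul_pos_right (one_pos.trans_le hn) (by positivity)
  calc 8 * n / ε ^ 2 ≤ p * ((4 * ε * n) * (2 * ε * n) / 2) := by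
        rw [div_le_iff₀ (by positivity)]
        linarith [mul_le_mul_of_nonneg_left hpn (by positivity : 0 ≤ 4 * n)]
    _ ≤ p * (a * (a - 1) / 2) := by
        gcongr <;> linarith

theorem IsPseudorandom.mul_ncard_sub_one_le {k : ℝ} (hG : IsPseudorandom ε p G) (hD : Orients D G)
    (hε : 0 < ε) (hp : 0 ≤ p) (hn : 1 ≤ 2 * ε * Nat.card V) (hpn : 2 ≤ ε ^ 4 * (p * Nat.card V))
    (hA : 4 * ε * Nat.card V ≤ A.ncard) (hk : ∀ a ∈ A, (outNbr D a ∩ A).ncard ≤ k) :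
    (1 - ε) * p * (A.ncard - 1) ≤ 2 * k := by
  have hcard : (((⊤ : SimpleGraph V).between A A).edgeSet.ncard : ℝ) =
      A.ncard * (A.ncard - 1) / 2 := by
    rw [ncard_edgeSet_between_top_self, Nat.cast_choose_two]
  have hdense := (hG.le_ncard_edgeSet_between A A
    (hcard ▸ eight_mul_div_sq_le hε hp hn hpn hA)).trans (hD.ncard_edgeSet_between_self_le_mul hk)
  rw [hcard] at hdense
  have hA₀ : (0 : ℝ) < A.ncard := by linarith
  refine le_of_mul_le_mul_left ?_ hA₀
  linarith

theorem IsPseudorandom.ncard_lt_of_ncard_outNbr_inter_le (hG : IsPseudorandom ε p G)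
    (hD : Orients D G) (hε : 0 < ε) (hε₁ : ε ≤ 1 / 2) (hp : 0 < p) (hn : 1 ≤ 2 * ε * Nat.card V)
    (hpn : 2 ≤ ε ^ 4 * (p * Nat.card V)) (hp_sq : 32 < ε ^ 3 * (p ^ 2 * Nat.card V))
    (hA : ∀ a ∈ A, p * (outNbr D a ∩ A).ncard ≤ 16 / ε ^ 2) :
    A.ncard < 4 * ε * Nat.card V := by
  by_contra! hlarge
  have hdense := hG.mul_ncard_sub_one_le hD hε hp.le hn hpn hlarge
    fun a ha ↦ (le_div_iff₀' hp).2 (hA a ha)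
  have hle : 1 / 2 * p * (2 * ε * Nat.card V) ≤ 32 / (ε ^ 2 * p) :=
    calc 1 / 2 * p * (2 * ε * Nat.card V) ≤ (1 - ε) * p * (A.ncard - 1) := by
          refine mul_le_mul (by gcongr; linarith) (by linarith) (by positivity) ?_
          exact mul_nonneg (by linarith) hp.le
      _ ≤ 2 * (16 / ε ^ 2 / p) := hdense
      _ = 32 / (ε ^ 2 * p) := by ring
  rw [le_div_iff₀ (by positivity)] at hle
  linarith

theorem IsPseudorandom.ncard_lt_of_ncard_outNbr_le (hG : IsPseudorandom ε p G) (hD : Orients D G)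
    (hε : 0 < ε) (hε₁ : ε ≤ 1 / 8) (hp : 0 < p) (hn : 1 ≤ 2 * ε * Nat.card V)
    (hpn : 2 ≤ ε ^ 4 * (p * Nat.card V))
    (hA : ∀ a ∈ A, (outNbr D a).ncard ≤ (1 / 2 - 4 * ε) * p * Nat.card V) :
    A.ncard < (1 - 4 * ε) * Nat.card V := by
  by_contra! hlarge
  have hdense := hG.mul_ncard_sub_one_le hD hε hp.le hn hpn (A := A)
    (hlarge.trans' (by gcongr; linarith))
    fun a ha ↦ (Nat.cast_le.2 (Set.ncard_le_ncard Set.inter_subset_left)).trans (hA a ha)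
  have hle : p * ((1 - ε) * ((1 - 4 * ε) * Nat.card V - 1)) ≤ p * ((1 - 8 * ε) * Nat.card V) :=
    calc p * ((1 - ε) * ((1 - 4 * ε) * Nat.card V - 1)) ≤ p * ((1 - ε) * (A.ncard - 1)) := by
          gcongr
          linarith
      _ = (1 - ε) * p * (A.ncard - 1) := by ring
      _ ≤ 2 * ((1 / 2 - 4 * ε) * p * Nat.card V) := hdense
      _ = p * ((1 - 8 * ε) * Nat.card V) := by ring
  nlinarith [le_of_mul_le_mul_left hle hp]

theorem exists_sullivanVertex_of_isPseudorandom (hG : IsPseudorandom ε p G) (hD : Orients D G)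
    (hε : 0 < ε) (hp : 0 < p) (hεp : p ≤ 1 / 2 - 8 * ε) (hpn : 32 < ε ^ 4 * (p ^ 2 * Nat.card V)) :
    ∃ v, SullivanVertex D v := by
  by_contra! hnone
  let H : Set V := {u | (1 / 2 - 4 * ε) * p * Nat.card V ≤ (outNbr D u).ncard}
  have hn₁ : 1 ≤ 2 * ε * Nat.card V := by
    have hle : ε ^ 4 * (p ^ 2 * Nat.card V) ≤ ε * (1 * Nat.card V) := by
      gcongr
      exacts [pow_le_of_le_one hε.le (by linarith) (by simp), pow_le_one₀ hp.le (by linarith)]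
    linarith
  have hpn₁ : 2 ≤ ε ^ 4 * (p * Nat.card V) := by
    have hle : ε ^ 4 * (p ^ 2 * Nat.card V) ≤ ε ^ 4 * (p * Nat.card V) := by
      gcongr
      exact pow_le_of_le_one hp.le (by linarith) two_ne_zero
    linarith
  have hpn₂ : 32 < ε ^ 3 * (p ^ 2 * Nat.card V) := by
    refine hpn.trans_le ?_
    gcongr ?_ * _
    exact pow_le_pow_of_le_one hε.le (by linarith) (by simp)
  have hfew (v : V) : p * (outNbr D v ∩ H).ncard < 16 / ε ^ 2 := by
    have hεp₁ : (1 + ε) * p ≤ 1 / 2 - 7 * ε := by nlinarith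
    exact hG.ncard_outNbr_inter_lt hD (hnone v) hε (by linarith) hp (by linarith) (by nlinarith)
  have hH := hG.ncard_lt_of_ncard_outNbr_inter_le hD hε (by linarith) hp hn₁ hpn₁ hpn₂
    fun a _ ↦ (hfew a).le
  have hHc := hG.ncard_lt_of_ncard_outNbr_le hD (A := Hᶜ) hε (by linarith) hp hn₁ hpn₁
    fun a ha ↦ le_of_not_ge ha
  have hcard : (H.ncard : ℝ) + Hᶜ.ncard = Nat.card V := by
    exact_mod_cast Set.ncard_add_ncard_compl H
  linarith

end Orientation

/-! ### Asymptotics -/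

theorem tendsto_sq_mul_of_tendsto_mul_log_rpow {p : ℕ → ℝ}
    (hp : Tendsto (fun n : ℕ ↦ p n * Real.log n ^ ((1 : ℝ) / 3)) atTop atTop) :
    Tendsto (fun n : ℕ ↦ p n ^ 2 * n) atTop atTop := by
  refine tendsto_atTop_mono' _ ?_ ((tendsto_pow_atTop two_ne_zero).comp hp)
  have hlog : ∀ᶠ n : ℕ in atTop, 1 ≤ Real.log n :=
    (Real.tendsto_log_atTop.comp tendsto_natCast_atTop_atTop).eventually_ge_atTop 1
  filter_upwards [hlog] with n hn
  have hpow : (Real.log n ^ ((1 : ℝ) / 3)) ^ 2 ≤ n :=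
    calc (Real.log n ^ ((1 : ℝ) / 3)) ^ 2 = Real.log n ^ ((2 : ℝ) / 3) := by
          rw [← Real.rpow_natCast, ← Real.rpow_mul (by linarith)]
          norm_num
      _ ≤ Real.log n := Real.rpow_le_self_of_one_le hn (by norm_num)
      _ ≤ n := Real.log_le_self n.cast_nonneg
  rw [Function.comp_apply, mul_pow]
  gcongr

theorem tendsto_natCast_mul_exp_neg_mul_sqrt {c : ℝ} (hc : 0 < c) :
    Tendsto (fun n : ℕ ↦ (n : ℝ) * Real.exp (-(c * √n))) atTop (nhds 0) := by
  have hsqrt : Tendsto (fun n : ℕ ↦ √(n : ℝ)) atTop atTop :=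
    Real.tendsto_sqrt_atTop.comp tendsto_natCast_atTop_atTop
  refine ((tendsto_rpow_mul_exp_neg_mul_atTop_nhds_zero 2 c hc).comp hsqrt).congr fun n ↦ ?_
  rw [Function.comp_apply, Real.rpow_two, Real.sq_sqrt n.cast_nonneg, neg_mul]

theorem tendsto_natCast_mul_exp_neg_mul {c : ℝ} (hc : 0 < c) {p : ℕ → ℝ} (hp : ∀ n, 0 ≤ p n)
    (hgrow : Tendsto (fun n : ℕ ↦ p n ^ 2 * n) atTop atTop) :
    Tendsto (fun n : ℕ ↦ (n : ℝ) * Real.exp (-(c * (p n * n)))) atTop (nhds 0) := by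
  refine squeeze_zero' (.of_forall fun n ↦ by positivity) ?_
    (tendsto_natCast_mul_exp_neg_mul_sqrt hc)
  filter_upwards [hgrow.eventually_ge_atTop 1] with n hn
  gcongr
  refine Real.sqrt_le_left (mul_nonneg (hp n) n.cast_nonneg) |>.2 ?_
  calc (n : ℝ) ≤ p n ^ 2 * n * n := le_mul_of_one_le_left n.cast_nonneg hn
    _ = (p n * n) ^ 2 := by ring

theorem four_mul_exp_neg_two_lt_one : 4 * Real.exp (-2) < 1 := by
  have hexp : (4 : ℝ) < Real.exp 2 :=
    calc (4 : ℝ) < Real.exp 1 ^ 2 := by nlinarith [Real.exp_one_gt_two]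
      _ = Real.exp 2 := by rw [← Real.exp_nat_mul]; norm_num
  rwa [Real.exp_neg, ← div_eq_mul_inv, div_lt_one (Real.exp_pos _)]

theorem tendsto_binomialRandom_real_not_isPseudorandom {ε : ℝ} (hε₀ : 0 < ε) (hε₁ : ε ≤ 1)
    {p : ℕ → I} (hp : Tendsto (fun n : ℕ ↦ (p n : ℝ) ^ 2 * n) atTop atTop) :
    Tendsto (fun n ↦ G(Fin n, p n).real {G | ¬ IsPseudorandom ε (p n) G}) atTop (nhds 0) := by
  have hdegree := tendsto_natCast_mul_exp_neg_mul (by positivity : 0 < ε ^ 2 / 4)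
    (fun n ↦ (p n).2.1) hp
  have hdensity := tendsto_pow_atTop_nhds_zero_of_lt_one (by positivity)
    four_mul_exp_neg_two_lt_one
  refine squeeze_zero (fun n ↦ measureReal_nonneg) (fun n ↦ ?_)
    (by simpa using hdegree.add hdensity)
  refine (binomialRandom_real_not_isPseudorandom_le (p n) hε₀ hε₁).trans_eq ?_
  rw [Nat.card_fin]
  ring_nf

theorem stmt_13_general (p : ℕ → ℝ) (hp : ∀ n, p n ∈ Set.Icc (0 : ℝ) 1)
    (hgrow : Tendsto (fun n : ℕ => p n ^ 2 * n) atTop atTop)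
    (hlim : limsup p atTop < 1/2) :
    Tendsto (fun n => gnpProb n (p n) (fun G =>
        ∀ D : Fin n → Fin n → Prop, Orients D G → ∃ v, SullivanVertex D v))
      atTop (nhds 1) := by
  lift p to ℕ → I using hp
  obtain ⟨b, hlimb, hb⟩ := exists_between hlim
  have hpb : ∀ᶠ n in atTop, (p n : ℝ) < b :=
    eventually_lt_of_limsup_lt hlimb (isBoundedUnder_of ⟨1, fun n ↦ (p n).2.2⟩)
  set ε : ℝ := (1 / 2 - b) / 8 with hε
  have hε₀ : 0 < ε := by linarith
  have hε₁ : ε ≤ 1 := by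
    obtain ⟨n, hn⟩ := hpb.exists
    linarith [(p n).2.1]
  have hlower := (tendsto_binomialRandom_real_not_isPseudorandom hε₀ hε₁ hgrow).const_sub 1
  rw [sub_zero] at hlower
  simp only [gnpProb_eq_binomialRandom_real]
  refine tendsto_of_tendsto_of_tendsto_of_le_of_le' hlower tendsto_const_nhds ?_
    (.of_forall fun n ↦ measureReal_le_one)
  filter_upwards [hpb, hgrow.eventually_gt_atTop (32 / ε ^ 4)] with n hpn hlarge
  have hpos : 0 < (p n : ℝ) := by
    refine (p n).2.1.lt_of_ne' fun hzero ↦ ?_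
    rw [hzero, zero_pow two_ne_zero, zero_mul] at hlarge
    exact hlarge.not_ge (by positivity)
  rw [div_lt_iff₀' (by positivity)] at hlarge
  rw [← probReal_compl_eq_one_sub (.of_discrete)]
  refine measureReal_mono fun G hG D hD ↦ ?_
  exact exists_sullivanVertex_of_isPseudorandom (not_not.1 hG) hD hε₀ hpos (by linarith)
    (by simpa using hlarge)

/-- if `p = p(n) ∈ [0,1]` satisfies `p(n)·(log n)^{1/3} → ∞` and
`limsup p < 1/2`, then a.a.s. every orientation of `G(n,p)` contains a Sullivan vertex. -/
theorem stmt_13 (p : ℕ → ℝ) (hp : ∀ n, p n ∈ Set.Icc (0 : ℝ) 1)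
    (hgrow : Tendsto (fun n : ℕ => p n * Real.log n ^ ((1 : ℝ)/3)) atTop atTop)
    (hlim : limsup p atTop < 1/2) :
    Tendsto (fun n => gnpProb n (p n) (fun G =>
        ∀ D : Fin n → Fin n → Prop, Orients D G → ∃ v, SullivanVertex D v))
      atTop (nhds 1) :=
  stmt_13_general p hp (tendsto_sq_mul_of_tendsto_mul_log_rpow hgrow) hlim
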